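/- Assume 0 < q_i(v) < 1 for every i ∈ {1,…,L} and v ∈ 𝒱. Let B ≥ 1 with B < N, set K = min(B, |𝒱|), and let T be a set of exactly B prefixes contained in S_K such that q(u) ≥ q(w) for every u ∈ T and every prefix w ∈ S_K \ T (i.e. T consists of top-B-mass prefixes of S_K). Then T is a valid draft tree, and for every valid draft tree T' with |T'| ≤ B one has E_{Y∼Q}[α_{T'}(Y)] ≤ E_{Y∼Q}[α_T(Y)]; that is, T maximizes the surrogate expected acceptance length among all valid draft trees with at most B nodes. -/

import Mathlib

/-- Prefix mass starting at (1-based) depth `d`. -/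
noncomputable def mass {V : Type*} (q : ℕ → V → ℝ) : ℕ → List V → ℝ
  | _, [] => 1
  | d, a :: l => q d a * mass q (d + 1) l

/-- A valid draft tree: a finite set of prefixes (tuples of length between 1 and `L`)
that is prefix-closed. -/
def ValidTree {V : Type*} (L : ℕ) (T : Finset (List V)) : Prop :=
  (∀ u ∈ T, 1 ≤ u.length ∧ u.length ≤ L) ∧
  (∀ u ∈ T, 2 ≤ u.length → u.dropLast ∈ T)

/-- Acceptance length. -/
def accLen {V : Type*} [DecidableEq V] {L : ℕ} (T : Finset (List V)) (y : Fin L → V) : ℕ :=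
  ((Finset.Icc 1 L).filter (fun d => (List.ofFn y).take d ∈ T)).sup id

/-- Membership in `S_K`: `u` is a prefix (length in `{1,…,L}`) whose token at each
(1-based) depth `j` has rank at most `K` in the enumeration `vEnum`. -/
def inSK {V : Type*} (vEnum : ℕ → ℕ → V) (L K : ℕ) (u : List V) : Prop :=
  1 ≤ u.length ∧ u.length ≤ L ∧
  ∀ j : Fin u.length, ∃ k, 1 ≤ k ∧ k ≤ K ∧ vEnum ((j : ℕ) + 1) k = u.get j

lemma aux_mass_ofFn {V : Type*} (q : ℕ → V → ℝ) : ∀ (n s : ℕ) (f : Fin n → V),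
    mass q s (List.ofFn f) = ∏ i : Fin n, q (s + i) (f i) := by
  intro n
  induction n with
  | zero => intro s f; simp [mass]
  | succ n ih =>
    intro s f
    rw [List.ofFn_succ, mass, ih, Fin.prod_univ_succ]
    simp only [Fin.val_zero, add_zero, Fin.val_succ, add_assoc, add_comm 1]

lemma aux_prefix_sum {V : Type*} [Fintype V] [DecidableEq V] (q : ℕ → V → ℝ) :
    ∀ (n s : ℕ) (u : List V), u.length ≤ n →
      (∀ i, s ≤ i → i < s + n → ∑ v : V, q i v = 1) →
      ∑ y : Fin n → V, mass q s (List.ofFn y) * (if u <+: List.ofFn y then (1:ℝ) else 0)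
        = mass q s u := by
  intro n
  induction n with
  | zero =>
    intro s u hu _
    have : u = [] := List.length_eq_zero_iff.mp (by omega)
    subst this
    simp [mass]
  | succ n ih =>
    intro s u hu hs
    rw [← (Fin.consEquiv (fun _ : Fin (n+1) => V)).sum_comp, Fintype.sum_prod_type]
    simp only [Fin.consEquiv_apply, List.ofFn_succ, Fin.cons_zero, Fin.cons_succ, mass]
    have hs' : ∀ i, s + 1 ≤ i → i < s + 1 + n → ∑ v : V, q i v = 1 :=
      fun i h1 h2 => hs i (by omega) (by omega)
    cases u with
    | nil =>
      have h0 := ih (s+1) [] (by simp) hs'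
      simp only [List.nil_prefix, if_true, mul_one, mass] at h0 ⊢
      simp_rw [← Finset.mul_sum, h0, mul_one]
      exact hs s le_rfl (by omega)
    | cons b u =>
      have h0 := ih (s+1) u (by simpa using hu) hs'
      rw [mass, ← h0, Finset.sum_eq_single b]
      · rw [Finset.mul_sum]
        refine Finset.sum_congr rfl fun y _ => ?_
        simp [List.cons_prefix_cons, mul_assoc]
      · intro a _ hab
        refine Finset.sum_eq_zero fun y _ => ?_
        simp [List.cons_prefix_cons, Ne.symm hab]
      · simp

lemma aux_accLen {V : Type*} [DecidableEq V] {L : ℕ} (T : Finset (List V))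
    (hT : ValidTree L T) (y : Fin L → V) :
    accLen T y = (T.filter (fun u => u <+: List.ofFn y)).card := by
  set S := (Finset.Icc 1 L).filter (fun d => (List.ofFn y).take d ∈ T) with hS
  have hacc : accLen T y = S.sup id := rfl
  have hdown : ∀ d, d + 1 ∈ S → 1 ≤ d → d ∈ S := by
    intro d hd h1
    simp only [hS, Finset.mem_filter, Finset.mem_Icc] at hd ⊢
    refine ⟨by omega, ?_⟩
    have h2 := hT.2 _ hd.2 (by rw [List.length_take, List.length_ofFn]; omega)
    rw [List.dropLast_eq_take, List.take_take, List.length_take, List.length_ofFn] at h2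
    have h3 : min (min (d + 1) L - 1) (d + 1) = d := by omega
    rwa [h3] at h2
  have hSI : S = Finset.Icc 1 (S.sup id) := by
    ext d
    constructor
    · intro hd
      have h1 : d ≤ S.sup id := Finset.le_sup (f := id) hd
      have h2 := (Finset.mem_Icc.mp (Finset.mem_filter.mp hd).1).1
      exact Finset.mem_Icc.mpr ⟨h2, h1⟩
    · intro hd
      obtain ⟨h1, h2⟩ := Finset.mem_Icc.mp hd
      have hne : S.Nonempty := by
        by_contra h
        rw [Finset.not_nonempty_iff_eq_empty] at h
        rw [h] at h2
        simp at h2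
        omega
      obtain ⟨m, hm, hme⟩ := Finset.exists_mem_eq_sup S hne id
      rw [hme] at h2
      simp only [id] at h2
      revert hm
      clear hme hd
      induction m, h2 using Nat.le_induction with
      | base => exact id
      | succ m hm ih => exact fun h => ih (hdown m h (by omega))
  have hc : S.card = S.sup id := by
    conv_lhs => rw [hSI]
    simp
  rw [hacc, ← hc]
  refine Finset.card_bij (fun d _ => (List.ofFn y).take d) ?_ ?_ ?_
  · intro d hd
    exact Finset.mem_filter.mpr ⟨(Finset.mem_filter.mp hd).2, List.take_prefix _ _⟩
  · intro a ha b hb h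
    have ha := Finset.mem_Icc.mp (Finset.mem_filter.mp ha).1
    have hb := Finset.mem_Icc.mp (Finset.mem_filter.mp hb).1
    have := congrArg List.length h
    simp at this
    omega
  · intro u hu
    obtain ⟨h1, h2⟩ := Finset.mem_filter.mp hu
    have h3 := List.prefix_iff_eq_take.mp h2
    refine ⟨u.length, Finset.mem_filter.mpr ⟨Finset.mem_Icc.mpr (hT.1 u h1), ?_⟩, h3.symm⟩
    rw [← h3]; exact h1

lemma aux_expect {V : Type*} [Fintype V] [DecidableEq V] (L : ℕ) (q : ℕ → V → ℝ)
    (hq1 : ∀ i ∈ Finset.Icc 1 L, ∑ v : V, q i v = 1)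
    (T : Finset (List V)) (hT : ValidTree L T) :
    ∑ y : Fin L → V, mass q 1 (List.ofFn y) * (accLen T y : ℝ) = ∑ u ∈ T, mass q 1 u := by
  simp_rw [aux_accLen T hT, Finset.card_filter, Nat.cast_sum, Finset.mul_sum]
  rw [Finset.sum_comm]
  refine Finset.sum_congr rfl fun u hu => ?_
  rw [← aux_prefix_sum q L 1 u (hT.1 u hu).2
    (fun i h1 h2 => hq1 i (Finset.mem_Icc.mpr ⟨h1, by omega⟩))]
  refine Finset.sum_congr rfl fun y _ => ?_
  push_cast
  rfl

lemma aux_inSK_ofFn {V : Type*} (vEnum : ℕ → ℕ → V) (L K n : ℕ) (f : Fin n → V) :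
    inSK vEnum L K (List.ofFn f) ↔ 1 ≤ n ∧ n ≤ L ∧
      ∀ j : Fin n, ∃ k, 1 ≤ k ∧ k ≤ K ∧ vEnum ((j : ℕ) + 1) k = f j := by
  unfold inSK
  simp only [List.length_ofFn]
  refine and_congr_right fun _ => and_congr_right fun _ => ?_
  constructor
  · intro h j
    simpa using h ⟨j, by simp⟩
  · intro h j
    simpa using h ⟨j, by simpa using j.2⟩

/-- Proposition: the best-first tree is optimal.
Assuming `0 < qᵢ(v) < 1` everywhere, let `1 ≤ B < N` and `K = min(B, |𝒱|)`. If `T` is a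
set of exactly `B` prefixes contained in `S_K` whose masses dominate those of all
prefixes of `S_K` outside `T`, then `T` is a valid draft tree and it maximizes the
surrogate expected acceptance length among all valid draft trees with at most `B`
nodes. Here `vEnum i k` is the rank-`k` token at depth `i` in a fixed
nonincreasing-probability enumeration of `𝒱`. -/
theorem top_B_of_SK_tree_valid_and_optimal {V : Type*} [Fintype V] [DecidableEq V] [Nonempty V]
    (L : ℕ) (hL : 1 ≤ L) (q : ℕ → V → ℝ)
    (hq0 : ∀ i ∈ Finset.Icc 1 L, ∀ v : V, 0 < q i v ∧ q i v < 1)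
    (hq1 : ∀ i ∈ Finset.Icc 1 L, ∑ v : V, q i v = 1)
    (vEnum : ℕ → ℕ → V)
    (hbij : ∀ i ∈ Finset.Icc 1 L, Set.BijOn (vEnum i) (Set.Icc 1 (Fintype.card V)) Set.univ)
    (hmono : ∀ i ∈ Finset.Icc 1 L, ∀ k k' : ℕ, 1 ≤ k → k ≤ k' → k' ≤ Fintype.card V →
      q i (vEnum i k') ≤ q i (vEnum i k))
    (B : ℕ) (hB : 1 ≤ B) (hBN : B < ∑ d ∈ Finset.Icc 1 L, Fintype.card V ^ d)
    (T : Finset (List V)) (hcard : T.card = B)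
    (hTS : ∀ u ∈ T, inSK vEnum L (min B (Fintype.card V)) u)
    (hTop : ∀ u ∈ T, ∀ w : List V, inSK vEnum L (min B (Fintype.card V)) w → w ∉ T →
      mass q 1 w ≤ mass q 1 u) :
    ValidTree L T ∧
    ∀ T' : Finset (List V), ValidTree L T' → T'.card ≤ B →
      ∑ y : Fin L → V, mass q 1 (List.ofFn y) * (accLen T' y : ℝ)
        ≤ ∑ y : Fin L → V, mass q 1 (List.ofFn y) * (accLen T y : ℝ) := by
  classical
  have hpos : ∀ (n : ℕ) (f : Fin n → V), n ≤ L → 0 < mass q 1 (List.ofFn f) := by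
    intro n f hn
    rw [aux_mass_ofFn]
    exact Finset.prod_pos fun i _ => (hq0 _ (Finset.mem_Icc.mpr ⟨by omega, by omega⟩) _).1
  have hpos' : ∀ u : List V, u.length ≤ L → 0 < mass q 1 u := by
    intro u hu
    have := hpos u.length u.get hu
    rwa [List.ofFn_get] at this
  have hval : ValidTree L T := by
    refine ⟨fun u hu => ⟨(hTS u hu).1, (hTS u hu).2.1⟩, fun u hu hlen => ?_⟩
    by_contra hnot
    have hs := hTS u hu
    obtain ⟨n, f, rfl⟩ : ∃ n, ∃ f : Fin n → V, u = List.ofFn f :=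
      ⟨u.length, u.get, (List.ofFn_get u).symm⟩
    simp only [List.length_ofFn] at hlen
    obtain ⟨m, rfl⟩ : ∃ m, n = m + 1 := ⟨n - 1, by omega⟩
    have hd : (List.ofFn f).dropLast = List.ofFn (fun i : Fin m => f i.castSucc) := by
      rw [List.ofFn_succ', List.concat_eq_append, List.dropLast_concat]
    rw [hd] at hnot
    rw [aux_inSK_ofFn] at hs
    have h1 := hTop _ hu _ ((aux_inSK_ofFn vEnum L _ m _).mpr
      ⟨by omega, by omega, fun j => hs.2.2 j.castSucc⟩) hnot
    have h2 := hpos m (fun i : Fin m => f i.castSucc) (by omega)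
    have h3 : mass q 1 (List.ofFn f) = mass q 1 (List.ofFn (fun i : Fin m => f i.castSucc))
        * q (1 + m) (f (Fin.last m)) := by
      rw [aux_mass_ofFn, aux_mass_ofFn, Fin.prod_univ_castSucc]
      simp
    have h4 := (hq0 (1 + m) (Finset.mem_Icc.mpr ⟨by omega, by omega⟩) (f (Fin.last m))).2
    rw [h3] at h1
    nlinarith
  have hdom : ∀ u ∈ T, ∀ w : List V, 1 ≤ w.length → w.length ≤ L → w ∉ T →
      mass q 1 w ≤ mass q 1 u := by
    intro u hu w hw1 hwL hwT
    by_cases hin : inSK vEnum L (min B (Fintype.card V)) w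
    · exact hTop u hu w hin hwT
    obtain ⟨n, f, rfl⟩ : ∃ n, ∃ f : Fin n → V, w = List.ofFn f :=
      ⟨w.length, w.get, (List.ofFn_get w).symm⟩
    simp only [List.length_ofFn] at hw1 hwL
    rw [aux_inSK_ofFn] at hin
    have hic : ∀ i : Fin n, (i : ℕ) + 1 ∈ Finset.Icc 1 L := fun i =>
      Finset.mem_Icc.mpr ⟨by omega, by omega⟩
    have hrank : ∀ i : Fin n, ∃ k, 1 ≤ k ∧ k ≤ Fintype.card V ∧ vEnum ((i : ℕ) + 1) k = f i := by
      intro i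
      obtain ⟨k, hk, hke⟩ := (hbij _ (hic i)).surjOn (Set.mem_univ (f i))
      exact ⟨k, hk.1, hk.2, hke⟩
    have hj : ∃ j : Fin n, ¬ ∃ k, 1 ≤ k ∧ k ≤ min B (Fintype.card V) ∧
        vEnum ((j : ℕ) + 1) k = f j := by
      by_contra h
      push Not at h
      exact hin ⟨hw1, hwL, h⟩
    obtain ⟨j, hj⟩ := hj
    obtain ⟨r, hr1, hr2, hr3⟩ := hrank j
    have hrB : B < r := by
      by_contra h
      exact hj ⟨r, hr1, le_min (by omega) hr2, hr3⟩
    have hBc : min B (Fintype.card V) = B := min_eq_left (by omega)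
    rw [hBc] at hTS hTop
    let g : Fin n → V := fun i =>
      if ∃ k, 1 ≤ k ∧ k ≤ B ∧ vEnum ((i : ℕ) + 1) k = f i then f i else vEnum ((i : ℕ) + 1) 1
    have hgS : ∀ i : Fin n, ∃ k, 1 ≤ k ∧ k ≤ B ∧ vEnum ((i : ℕ) + 1) k = g i := by
      intro i
      by_cases h : ∃ k, 1 ≤ k ∧ k ≤ B ∧ vEnum ((i : ℕ) + 1) k = f i
      · simp only [g, if_pos h]; exact h
      · simp only [g, if_neg h]; exact ⟨1, le_rfl, hB, rfl⟩
    have hgq : ∀ i : Fin n, q (1 + i) (f i) ≤ q (1 + i) (g i) := by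
      intro i
      by_cases h : ∃ k, 1 ≤ k ∧ k ≤ B ∧ vEnum ((i : ℕ) + 1) k = f i
      · simp only [g, if_pos h]; exact le_rfl
      · simp only [g, if_neg h]
        obtain ⟨k, hk1, hk2, hk3⟩ := hrank i
        rw [← hk3, add_comm 1]
        exact hmono _ (hic i) 1 k le_rfl hk1 hk2
    let W : ℕ → List V := fun k => List.ofFn (Function.update g j (vEnum ((j : ℕ) + 1) k))
    have hWS : ∀ k, 1 ≤ k → k ≤ B → inSK vEnum L B (W k) := by
      intro k hk1 hk2
      refine (aux_inSK_ofFn _ _ _ _ _).mpr ⟨hw1, hwL, fun i => ?_⟩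
      by_cases h : i = j
      · subst h; exact ⟨k, hk1, hk2, by simp⟩
      · rw [Function.update_of_ne h]; exact hgS i
    have hWm : ∀ k, 1 ≤ k → k ≤ B → mass q 1 (List.ofFn f) ≤ mass q 1 (W k) := by
      intro k hk1 hk2
      simp only [W]
      rw [aux_mass_ofFn, aux_mass_ofFn]
      refine Finset.prod_le_prod (fun i _ => ?_) (fun i _ => ?_)
      · rw [add_comm]; exact (hq0 _ (hic i) _).1.le
      · by_cases h : i = j
        · subst h
          rw [Function.update_self, ← hr3, add_comm 1]
          exact hmono _ (hic i) k r hk1 (by omega) hr2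
        · rw [Function.update_of_ne h]; exact hgq i
    have hWinj : Set.InjOn W (Finset.Icc 1 B : Finset ℕ) := by
      intro a ha b hb hab
      have ha := Finset.mem_Icc.mp (Finset.mem_coe.mp ha)
      have hb := Finset.mem_Icc.mp (Finset.mem_coe.mp hb)
      have h := congrFun (List.ofFn_injective hab) j
      simp only [Function.update_self] at h
      exact (hbij _ (hic j)).injOn ⟨ha.1, by omega⟩ ⟨hb.1, by omega⟩ h
    by_cases hsub : (Finset.Icc 1 B).image W ⊆ T
    · have heq := Finset.eq_of_subset_of_card_le hsub (by
        rw [Finset.card_image_of_injOn hWinj, hcard]; simp)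
      rw [← heq] at hu
      obtain ⟨k, hk, rfl⟩ := Finset.mem_image.mp hu
      have hk := Finset.mem_Icc.mp hk
      exact hWm k hk.1 hk.2
    · obtain ⟨x, hx, hxT⟩ := Finset.not_subset.mp hsub
      obtain ⟨k, hk, rfl⟩ := Finset.mem_image.mp hx
      have hk := Finset.mem_Icc.mp hk
      exact (hWm k hk.1 hk.2).trans (hTop u hu _ (hWS k hk.1 hk.2) hxT)
  refine ⟨hval, fun T' hT' hc' => ?_⟩
  rw [aux_expect L q hq1 T' hT', aux_expect L q hq1 T hval]
  have hTne : T.Nonempty := Finset.card_pos.mp (by omega)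
  obtain ⟨u0, hu0, hmin⟩ := Finset.exists_min_image T (mass q 1) hTne
  have e1 := Finset.sum_inter_add_sum_sdiff T' T (mass q 1)
  have e2 := Finset.sum_inter_add_sum_sdiff T T' (mass q 1)
  have c1 := Finset.card_sdiff_add_card_inter T' T
  have c2 := Finset.card_sdiff_add_card_inter T T'
  rw [Finset.inter_comm T T'] at e2 c2
  have b1 : ∑ x ∈ T' \ T, mass q 1 x ≤ (T' \ T).card • mass q 1 u0 :=
    Finset.sum_le_card_nsmul _ _ _ fun x hx => by
      obtain ⟨h1, h2⟩ := Finset.mem_sdiff.mp hx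
      exact hdom u0 hu0 x (hT'.1 x h1).1 (hT'.1 x h1).2 h2
  have b2 : (T \ T').card • mass q 1 u0 ≤ ∑ x ∈ T \ T', mass q 1 x :=
    Finset.card_nsmul_le_sum _ _ _ fun x hx => hmin x (Finset.mem_sdiff.mp hx).1
  have b3 : (T' \ T).card • mass q 1 u0 ≤ (T \ T').card • mass q 1 u0 :=
    nsmul_le_nsmul_left (hpos' u0 (hval.1 u0 hu0).2).le (by omega)
  linarith
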